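/- Let A and B be n×n complex positive definite matrices and let h, h' be reals with 1 < h' ≤ h such that h'·A ≤ B ≤ h·A in the Loewner order. Let Φ be a positive linear map from n×n complex matrices to m×m complex matrices such that Φ(A) and Φ(B) are positive definite. Then for every p ∈ [0,1], with r := min{p, 1−p} and R := max{p, 1−p}, the following chain holds in the Loewner order: (K(h',2)^r / K(h,2)^R)·Φ(A #_p B) ≤ (1/K(h,2)^R)·Φ(A ∇_p B) ≤ Φ(A) #_p Φ(B) ≤ (1/K(h',2)^r)·Φ(A ∇_p B) ≤ (K(h,2)^R / K(h',2)^r)·Φ(A #_p B). -/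

import Mathlib

open Matrix ComplexOrder

/-- Real power of a (Hermitian) complex matrix via the continuous functional calculus,
corresponding to `Matrix.PosDef.rpow` on positive definite matrices. -/
noncomputable def mrpow {n : Type*} [Fintype n] [DecidableEq n]
    (A : Matrix n n ℂ) (r : ℝ) : Matrix n n ℂ :=
  cfc (fun t : ℝ => t ^ r) A

/-- The Loewner order: `loe X Y` means `Y - X` is positive semidefinite. -/
def loe {n : Type*} [Fintype n] (X Y : Matrix n n ℂ) : Prop :=
  (Y - X).PosSemidef

/-- `A ♮ᵣ B = A^{1/2} (A^{-1/2} B A^{-1/2})^r A^{1/2}`; for `r ∈ [0,1]` this is the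
weighted geometric mean `A #ᵣ B`. -/
noncomputable def natu {n : Type*} [Fintype n] [DecidableEq n]
    (A B : Matrix n n ℂ) (r : ℝ) : Matrix n n ℂ :=
  mrpow A (1 / 2) * mrpow (mrpow A (-(1 / 2)) * B * mrpow A (-(1 / 2))) r * mrpow A (1 / 2)

/-- The Tsallis relative operator entropy `T_p(A|B) = (A #_p B - A) / p`. -/
noncomputable def TsallisEntropy {n : Type*} [Fintype n] [DecidableEq n]
    (A B : Matrix n n ℂ) (p : ℝ) : Matrix n n ℂ :=
  (1 / p : ℝ) • (natu A B p - A)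

section ScalarBounds

lemma kantorovich_pos {t : ℝ} (ht : 0 < t) : 0 < (t + 1) ^ (2 : ℕ) / (4 * t) := by
  positivity

lemma kantorovich_mono {s t : ℝ} (hs : 1 ≤ s) (hst : s ≤ t) :
    (s + 1) ^ (2 : ℕ) / (4 * s) ≤ (t + 1) ^ (2 : ℕ) / (4 * t) := by
  rw [div_le_div_iff₀ (by linarith) (by linarith)]
  have h1 : 0 ≤ (t - s) * (s * t - 1) := mul_nonneg (by linarith) (by nlinarith)
  nlinarith

lemma kantorovich_inv {t : ℝ} (ht : 0 < t) :
    (t⁻¹ + 1) ^ (2 : ℕ) / (4 * t⁻¹) = (t + 1) ^ (2 : ℕ) / (4 * t) := by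
  field_simp
  ring

lemma kantorovich_rpow_mul_rpow {t : ℝ} (ht : 0 < t) (p : ℝ) :
    ((t + 1) ^ (2 : ℕ) / (4 * t)) ^ p * t ^ p = (1 + (t - 1) / 2) ^ (2 * p) := by
  rw [← Real.mul_rpow (by positivity) ht.le, Real.rpow_mul (by linarith), Real.rpow_two]
  congr 1
  field_simp
  ring

lemma kantorovich_rpow_mul_rpow_le {t p : ℝ} (ht : 0 < t) (hp0 : 0 ≤ p) (hp : p ≤ 1 / 2) :
    ((t + 1) ^ (2 : ℕ) / (4 * t)) ^ p * t ^ p ≤ 1 - p + p * t := by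
  rw [kantorovich_rpow_mul_rpow ht]
  have := rpow_one_add_le_one_add_mul_self (s := (t - 1) / 2) (p := 2 * p)
    (by linarith) (by linarith) (by linarith)
  linarith

lemma le_kantorovich_rpow_mul_rpow {t p : ℝ} (ht : 0 < t) (hp : 1 / 2 ≤ p) :
    1 - p + p * t ≤ ((t + 1) ^ (2 : ℕ) / (4 * t)) ^ p * t ^ p := by
  rw [kantorovich_rpow_mul_rpow ht]
  have := one_add_mul_self_le_rpow_one_add (s := (t - 1) / 2) (p := 2 * p)
    (by linarith) (by linarith)
  linarith

lemma kantorovich_rpow_one_sub_mul_rpow {t : ℝ} (ht : 0 < t) (p : ℝ) :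
    ((t + 1) ^ (2 : ℕ) / (4 * t)) ^ (1 - p) * t ^ p =
      t * (((t⁻¹ + 1) ^ (2 : ℕ) / (4 * t⁻¹)) ^ (1 - p) * t⁻¹ ^ (1 - p)) := by
  rw [kantorovich_inv ht, Real.inv_rpow ht.le, ← Real.rpow_neg ht.le, neg_sub,
    Real.rpow_sub_one ht.ne']
  field_simp

/-- The refined Young inequality with the Kantorovich constant. -/
lemma kantorovich_rpow_min_mul_rpow_le {t p : ℝ} (ht : 0 < t) (hp0 : 0 ≤ p) (hp1 : p ≤ 1) :
    ((t + 1) ^ (2 : ℕ) / (4 * t)) ^ min p (1 - p) * t ^ p ≤ 1 - p + p * t := by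
  rcases le_total p (1 / 2) with hp | hp
  · rw [min_eq_left (by linarith)]
    exact kantorovich_rpow_mul_rpow_le ht hp0 hp
  · rw [min_eq_right (by linarith), kantorovich_rpow_one_sub_mul_rpow ht]
    have := mul_le_mul_of_nonneg_left (kantorovich_rpow_mul_rpow_le (inv_pos.2 ht)
      (sub_nonneg.2 hp1) (by linarith)) ht.le
    refine this.trans_eq ?_
    field_simp
    ring

/-- The reverse Young inequality with the Kantorovich constant. -/
lemma le_kantorovich_rpow_max_mul_rpow {t : ℝ} (ht : 0 < t) (p : ℝ) :
    1 - p + p * t ≤ ((t + 1) ^ (2 : ℕ) / (4 * t)) ^ max p (1 - p) * t ^ p := by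
  rcases le_total p (1 / 2) with hp | hp
  · rw [max_eq_right (by linarith), kantorovich_rpow_one_sub_mul_rpow ht]
    have := mul_le_mul_of_nonneg_left (le_kantorovich_rpow_mul_rpow (p := 1 - p) (inv_pos.2 ht)
      (by linarith)) ht.le
    refine Eq.trans_le ?_ this
    field_simp
    ring
  · rw [max_eq_left (by linarith)]
    exact le_kantorovich_rpow_mul_rpow ht hp

end ScalarBounds

section MatrixBounds

open scoped MatrixOrder

variable {n : Type*} [Fintype n] [DecidableEq n] {A B : Matrix n n ℂ}

lemma continuousOn_spectrum (f : ℝ → ℝ) (A : Matrix n n ℂ) : ContinuousOn f (spectrum ℝ A) :=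
  A.finite_real_spectrum.continuousOn f

lemma isSelfAdjoint_mrpow (A : Matrix n n ℂ) (r : ℝ) : IsSelfAdjoint (mrpow A r) :=
  cfc_predicate _ A

lemma mrpow_mul_mrpow (hA : A.PosDef) (r s : ℝ) : mrpow A r * mrpow A s = mrpow A (r + s) := by
  unfold mrpow
  rw [← cfc_mul _ _ A (continuousOn_spectrum _ _) (continuousOn_spectrum _ _)]
  exact cfc_congr fun x hx => (Real.rpow_add (hA.isStrictlyPositive.spectrum_pos hx) r s).symm

lemma mrpow_zero (hA : A.PosDef) : mrpow A 0 = 1 := by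
  have : IsSelfAdjoint A := hA.isHermitian
  simp [mrpow, cfc_const_one ℝ A]

lemma mrpow_one (hA : A.PosDef) : mrpow A 1 = A := by
  have : IsSelfAdjoint A := hA.isHermitian
  simp [mrpow, cfc_id' ℝ A]

lemma mrpow_conj_self (hA : A.PosDef) : mrpow A (-(1 / 2)) * A * mrpow A (-(1 / 2)) = 1 := by
  nth_rw 2 [← mrpow_one hA]
  rw [mrpow_mul_mrpow hA, mrpow_mul_mrpow hA, ← mrpow_zero hA]
  norm_num

lemma mrpow_conj_one (hA : A.PosDef) : mrpow A (1 / 2) * mrpow A (1 / 2) = A := by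
  nth_rw 3 [← mrpow_one hA]
  rw [mrpow_mul_mrpow hA]
  norm_num

lemma mrpow_conj_conj (hA : A.PosDef) (B : Matrix n n ℂ) :
    mrpow A (1 / 2) * (mrpow A (-(1 / 2)) * B * mrpow A (-(1 / 2))) * mrpow A (1 / 2) = B := by
  have h1 : mrpow A (1 / 2) * mrpow A (-(1 / 2)) = 1 := by
    rw [mrpow_mul_mrpow hA, add_neg_cancel, mrpow_zero hA]
  have h2 : mrpow A (-(1 / 2)) * mrpow A (1 / 2) = 1 := by
    rw [mrpow_mul_mrpow hA, neg_add_cancel, mrpow_zero hA]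
  calc _ = (mrpow A (1 / 2) * mrpow A (-(1 / 2))) * B *
        (mrpow A (-(1 / 2)) * mrpow A (1 / 2)) := by simp only [mul_assoc]
    _ = B := by rw [h1, h2, one_mul, mul_one]

lemma spectrum_mrpow_conj_subset_Icc (hA : A.PosDef) (hB : B.IsHermitian) {a b : ℝ}
    (hlow : loe (a • A) B) (hup : loe B (b • A)) :
    spectrum ℝ (mrpow A (-(1 / 2)) * B * mrpow A (-(1 / 2))) ⊆ Set.Icc a b := by
  have hS := isSelfAdjoint_mrpow A (-(1 / 2))
  have hC : IsSelfAdjoint (mrpow A (-(1 / 2)) * B * mrpow A (-(1 / 2))) :=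
    IsSelfAdjoint.conjugate_self hB hS
  have h1 := hS.conjugate_le_conjugate (show a • A ≤ B from hlow)
  have h2 := hS.conjugate_le_conjugate (show B ≤ b • A from hup)
  rw [mul_smul_comm, smul_mul_assoc, mrpow_conj_self hA, ← Algebra.algebraMap_eq_smul_one] at h1 h2
  exact fun x hx => ⟨(algebraMap_le_iff_le_spectrum hC).1 h1 x hx,
    (le_algebraMap_iff_spectrum_le hC).1 h2 x hx⟩

lemma natu_bounds_of_rpow_bounds (hA : A.PosDef) (hB : B.IsHermitian) {a b p c d : ℝ}
    (hlow : loe (a • A) B) (hup : loe B (b • A))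
    (hc : ∀ t ∈ Set.Icc a b, c * t ^ p ≤ 1 - p + p * t)
    (hd : ∀ t ∈ Set.Icc a b, 1 - p + p * t ≤ d * t ^ p) :
    loe (c • natu A B p) ((1 - p) • A + p • B) ∧ loe ((1 - p) • A + p • B) (d • natu A B p) := by
  have hspec := spectrum_mrpow_conj_subset_Icc hA hB hlow hup
  have hback := mrpow_conj_conj hA B
  have hH := isSelfAdjoint_mrpow A (1 / 2)
  have hC : IsSelfAdjoint (mrpow A (-(1 / 2)) * B * mrpow A (-(1 / 2))) :=
    IsSelfAdjoint.conjugate_self hB (isSelfAdjoint_mrpow A (-(1 / 2)))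
  unfold natu
  set C := mrpow A (-(1 / 2)) * B * mrpow A (-(1 / 2))
  have hpow (k : ℝ) : cfc (fun t : ℝ => k * t ^ p) C = k • mrpow C p :=
    cfc_const_mul k _ C (continuousOn_spectrum _ _)
  have haff : cfc (fun t : ℝ => 1 - p + p * t) C = (1 - p) • 1 + p • C := by
    rw [cfc_const_add _ _ C (continuousOn_spectrum _ _), cfc_const_mul_id p C,
      Algebra.algebraMap_eq_smul_one]
  have hmean : mrpow A (1 / 2) * ((1 - p) • 1 + p • C) * mrpow A (1 / 2) =
      (1 - p) • A + p • B := by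
    rw [mul_add, add_mul, mul_smul_comm, mul_smul_comm, smul_mul_assoc, smul_mul_assoc, hback,
      mul_one, mrpow_conj_one hA]
  have hnatu (k : ℝ) : mrpow A (1 / 2) * (k • mrpow C p) * mrpow A (1 / 2) =
      k • (mrpow A (1 / 2) * mrpow C p * mrpow A (1 / 2)) := by
    rw [mul_smul_comm, smul_mul_assoc]
  have h1 : cfc (fun t : ℝ => c * t ^ p) C ≤ cfc (fun t : ℝ => 1 - p + p * t) C :=
    cfc_mono (fun t ht => hc t (hspec ht)) (continuousOn_spectrum _ _) (continuousOn_spectrum _ _)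
  have h2 : cfc (fun t : ℝ => 1 - p + p * t) C ≤ cfc (fun t : ℝ => d * t ^ p) C :=
    cfc_mono (fun t ht => hd t (hspec ht)) (continuousOn_spectrum _ _) (continuousOn_spectrum _ _)
  rw [hpow, haff] at h1 h2
  have hconj1 := hH.conjugate_le_conjugate h1
  have hconj2 := hH.conjugate_le_conjugate h2
  rw [hmean, hnatu] at hconj1 hconj2
  exact ⟨hconj1, hconj2⟩

/-- The Kantorovich-refined arithmetic–geometric mean inequality and its reverse, for matrices. -/
lemma natu_kantorovich_bounds (hA : A.PosDef) (hB : B.IsHermitian) {h h' : ℝ} (hh' : 1 < h')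
    (hlow : loe (h' • A) B) (hup : loe B (h • A)) {p : ℝ} (hp0 : 0 ≤ p) (hp1 : p ≤ 1) :
    loe ((((h' + 1) ^ (2 : ℕ) / (4 * h')) ^ min p (1 - p)) • natu A B p)
      ((1 - p) • A + p • B) ∧
    loe ((1 - p) • A + p • B)
      ((((h + 1) ^ (2 : ℕ) / (4 * h)) ^ max p (1 - p)) • natu A B p) := by
  refine natu_bounds_of_rpow_bounds hA hB hlow hup (fun t ht => ?_) (fun t ht => ?_)
  · have ht0 : 0 < t := by linarith [ht.1]
    refine le_trans ?_ (kantorovich_rpow_min_mul_rpow_le ht0 hp0 hp1)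
    exact mul_le_mul_of_nonneg_right (Real.rpow_le_rpow (kantorovich_pos (by linarith)).le
      (kantorovich_mono hh'.le ht.1) (le_min hp0 (by linarith))) (Real.rpow_nonneg ht0.le _)
  · have ht0 : 0 < t := by linarith [ht.1]
    refine (le_kantorovich_rpow_max_mul_rpow ht0 p).trans ?_
    exact mul_le_mul_of_nonneg_right (Real.rpow_le_rpow (kantorovich_pos ht0).le
      (kantorovich_mono (hh'.le.trans ht.1) ht.2) (le_max_of_le_left hp0))
      (Real.rpow_nonneg ht0.le _)

end MatrixBounds

section LoewnerOrder

lemma loe.map {n m : Type*} [Fintype n] [Fintype m] {Φ : Matrix n n ℂ →ₗ[ℂ] Matrix m m ℂ}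
    (hΦ : ∀ X : Matrix n n ℂ, X.PosSemidef → (Φ X).PosSemidef) {X Y : Matrix n n ℂ}
    (h : loe X Y) : loe (Φ X) (Φ Y) := by
  unfold loe
  rw [← map_sub]
  exact hΦ _ h

lemma loe.smul {n : Type*} [Fintype n] {X Y : Matrix n n ℂ} (h : loe X Y) {c : ℝ} (hc : 0 ≤ c) :
    loe (c • X) (c • Y) := by
  unfold loe
  rw [← smul_sub]
  exact Matrix.PosSemidef.smul h hc

end LoewnerOrder

theorem stmt14 {n m : Type*} [Fintype n] [DecidableEq n] [Fintype m] [DecidableEq m]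
    {A B : Matrix n n ℂ} (hA : A.PosDef) (hB : B.PosDef)
    {h h' : ℝ} (hh'1 : 1 < h') (hh'h : h' ≤ h)
    (hlow : loe (h' • A) B) (hup : loe B (h • A))
    (Φ : Matrix n n ℂ →ₗ[ℂ] Matrix m m ℂ)
    (hΦpos : ∀ X : Matrix n n ℂ, X.PosSemidef → (Φ X).PosSemidef)
    (hΦA : (Φ A).PosDef) (hΦB : (Φ B).PosDef)
    {p : ℝ} (hp0 : 0 ≤ p) (hp1 : p ≤ 1) :
    loe (((((h' + 1) ^ (2 : ℕ) / (4 * h')) ^ min p (1 - p)) /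
          (((h + 1) ^ (2 : ℕ) / (4 * h)) ^ max p (1 - p))) • Φ (natu A B p))
      ((1 / (((h + 1) ^ (2 : ℕ) / (4 * h)) ^ max p (1 - p))) • Φ ((1 - p) • A + p • B)) ∧
    loe ((1 / (((h + 1) ^ (2 : ℕ) / (4 * h)) ^ max p (1 - p))) • Φ ((1 - p) • A + p • B))
      (natu (Φ A) (Φ B) p) ∧
    loe (natu (Φ A) (Φ B) p)
      ((1 / (((h' + 1) ^ (2 : ℕ) / (4 * h')) ^ min p (1 - p))) • Φ ((1 - p) • A + p • B)) ∧
    loe ((1 / (((h' + 1) ^ (2 : ℕ) / (4 * h')) ^ min p (1 - p))) • Φ ((1 - p) • A + p • B))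
      (((((h + 1) ^ (2 : ℕ) / (4 * h)) ^ max p (1 - p)) /
          (((h' + 1) ^ (2 : ℕ) / (4 * h')) ^ min p (1 - p))) • Φ (natu A B p)) := by
  have hk : 0 < ((h' + 1) ^ (2 : ℕ) / (4 * h')) ^ min p (1 - p) :=
    Real.rpow_pos_of_pos (kantorovich_pos (by linarith)) _
  have hK : 0 < ((h + 1) ^ (2 : ℕ) / (4 * h)) ^ max p (1 - p) :=
    Real.rpow_pos_of_pos (kantorovich_pos (by linarith)) _
  obtain ⟨h1, h2⟩ := natu_kantorovich_bounds hA hB.isHermitian hh'1 hlow hup hp0 hp1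
  have hlowΦ := hlow.map hΦpos
  have hupΦ := hup.map hΦpos
  rw [LinearMap.map_smul_of_tower] at hlowΦ hupΦ
  obtain ⟨h3, h4⟩ := natu_kantorovich_bounds hΦA hΦB.isHermitian hh'1 hlowΦ hupΦ hp0 hp1
  have hmean : (1 - p) • Φ A + p • Φ B = Φ ((1 - p) • A + p • B) := by
    rw [map_add, LinearMap.map_smul_of_tower, LinearMap.map_smul_of_tower]
  rw [hmean] at h3 h4
  have h1Φ := h1.map hΦpos
  have h2Φ := h2.map hΦpos
  rw [LinearMap.map_smul_of_tower] at h1Φ h2Φ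
  generalize ((h' + 1) ^ (2 : ℕ) / (4 * h')) ^ min p (1 - p) = k at *
  generalize ((h + 1) ^ (2 : ℕ) / (4 * h)) ^ max p (1 - p) = K at *
  refine ⟨?_, ?_, ?_, ?_⟩
  · have := h1Φ.smul (one_div_pos.2 hK).le
    rwa [smul_smul, one_div_mul_eq_div] at this
  · have := h4.smul (one_div_pos.2 hK).le
    rwa [smul_smul, one_div_mul_cancel hK.ne', one_smul] at this
  · have := h3.smul (one_div_pos.2 hk).le
    rwa [smul_smul, one_div_mul_cancel hk.ne', one_smul] at this
  · have := h2Φ.smul (one_div_pos.2 hk).le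
    rwa [smul_smul, one_div_mul_eq_div] at this
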